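/- For every s ∈ ℝ and b > 1/2 there exists C > 0 such that for every τ ∈ (0,1] and every sequence (u_n)_{n∈ℤ} of functions in H^s(𝕋) with only finitely many nonzero terms, sup_{n∈ℤ} ‖u_n‖_{H^s} ≤ C ‖(u_n)‖_{X^{s,b}_τ}. -/

import Mathlib

noncomputable section

open MeasureTheory Complex Filter Topology AddCircle
open scoped ENNReal

abbrev Torus := AddCircle (2 * Real.pi)

instance : Fact (0 < 2 * Real.pi) := ⟨by positivity⟩

/-- Japanese bracket `⟨x⟩ = (1+|x|²)^{1/2}`. -/
def jbr (x : ℝ) : ℝ := Real.sqrt (1 + x ^ 2)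

/-- The Sobolev `H^s` norm on the torus, via Fourier coefficients. -/
def hsNorm (s : ℝ) (f : Torus → ℂ) : ℝ :=
  Real.sqrt (∑' k : ℤ, jbr k ^ (2 * s) * ‖fourierCoeff f k‖ ^ 2)

/-- Membership in `H^s(𝕋)` (as a function): square integrable with finite `H^s` norm. -/
def InHs (s : ℝ) (f : Torus → ℂ) : Prop :=
  MemLp f 2 haarAddCircle ∧ Summable fun k : ℤ => jbr k ^ (2 * s) * ‖fourierCoeff f k‖ ^ 2

/-- The frequency cutoff `Π_τ`, keeping the Fourier modes `|k| ≤ τ^{-1/2}`. -/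
def projC (τ : ℝ) (f : Torus → ℂ) : Torus → ℂ := fun x =>
  ∑' k : ℤ, if |(k : ℝ)| ≤ τ ^ (-(1 : ℝ) / 2) then fourierCoeff f k * fourier k x else 0

/-- The free Schrödinger group `e^{it∂_x²}`, given by the Fourier multiplier `e^{-itk²}`. -/
def schrod (t : ℝ) (f : Torus → ℂ) : Torus → ℂ := fun x =>
  ∑' k : ℤ, Complex.exp (-Complex.I * t * (k : ℂ) ^ 2) * fourierCoeff f k * fourier k x

/-- Continuity on `I` with values in `L²(𝕋)`. -/
def ContL2On (I : Set ℝ) (u : ℝ → Torus → ℂ) : Prop :=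
  (∀ t ∈ I, MemLp (u t) 2 haarAddCircle) ∧
  ∀ t ∈ I, Tendsto (fun t' => eLpNorm (u t' - u t) 2 haarAddCircle) (nhdsWithin t I) (nhds 0)

/-- Continuity on `I` with values in `H^s(𝕋)`. -/
def ContHsOn (s : ℝ) (I : Set ℝ) (u : ℝ → Torus → ℂ) : Prop :=
  (∀ t ∈ I, InHs s (u t)) ∧
  ∀ t ∈ I, Tendsto (fun t' => hsNorm s (u t' - u t)) (nhdsWithin t I) (nhds 0)

/-- The cubic nonlinearity `|f|² f` (pointwise). -/
def cubic (f : Torus → ℂ) : Torus → ℂ := fun x => (‖f x‖ : ℂ) ^ 2 * f x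

/-- The filtered cubic nonlinearity `Π_τ(|Π_τ f|² Π_τ f)`. -/
def projCubic (τ : ℝ) (f : Torus → ℂ) : Torus → ℂ := projC τ (cubic (projC τ f))

/-- `v` is the (global-in-time) mild solution of the projected equation
`i∂_t v = -∂_x² v - μ Π_τ(|Π_τ v|² Π_τ v)`, `v(0) = Π_τ u₀`. -/
def IsProjSolution (μ τ : ℝ) (u₀ : Torus → ℂ) (v : ℝ → Torus → ℂ) : Prop :=
  ContL2On Set.univ v ∧
  ∀ t : ℝ, ∀ x : Torus,
    v t x = schrod t (projC τ u₀) x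
      + Complex.I * μ * ∫ s in (0 : ℝ)..t, schrod (t - s) (projCubic τ (v s)) x

/-- The cubic NLS `i∂_t u = -∂_x² u - μ |u|² u` holds in the sense of space-time
distributions on `(0,T) × 𝕋` (tested against `ψ(t) e^{-ikx}`). -/
def DistribSolOn (μ T : ℝ) (u : ℝ → Torus → ℂ) : Prop :=
  ∀ k : ℤ, ∀ ψ : ℝ → ℂ, ContDiff ℝ (⊤ : ℕ∞) ψ → tsupport ψ ⊆ Set.Ioo 0 T →
    -Complex.I * ∫ t : ℝ, deriv ψ t * fourierCoeff (u t) k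
      = (k : ℂ) ^ 2 * ∫ t : ℝ, ψ t * fourierCoeff (u t) k
        - (μ : ℂ) * ∫ t : ℝ, ψ t * fourierCoeff (cubic (u t)) k

/-- `u ∈ L⁴((0,T) × 𝕋)`. -/
def SpaceTimeL4 (T : ℝ) (u : ℝ → Torus → ℂ) : Prop :=
  MemLp (fun p : ℝ × Torus => u p.1 p.2) 4
    ((volume.restrict (Set.Ioo 0 T)).prod haarAddCircle)

/-- Space-time Fourier transform `ṽ(σ,k)` of `v : ℝ × 𝕋 → ℂ`. -/
def stFT (v : ℝ → Torus → ℂ) (σ : ℝ) (k : ℤ) : ℂ :=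
  ∫ t : ℝ, Complex.exp (-Complex.I * σ * t) * fourierCoeff (v t) k

/-- The (continuous) Bourgain `X^{s,b}` norm, valued in `ℝ≥0∞`. -/
def XcNorm (s b : ℝ) (v : ℝ → Torus → ℂ) : ℝ≥0∞ :=
  (∫⁻ σ : ℝ, ∑' k : ℤ,
      ENNReal.ofReal ((1 + |(k : ℝ)|) ^ (2 * s) * (1 + |σ + (k : ℝ) ^ 2|) ^ (2 * b)
        * ‖stFT v σ k‖ ^ 2)) ^ (1 / 2 : ℝ)

/-- The restriction norm `‖u‖_{X^{s,b}(T)}` is bounded by `M`: some extension of `u`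
from `(0,T)` has `X^{s,b}` norm at most `M`. -/
def XresBounded (s b T : ℝ) (u : ℝ → Torus → ℂ) (M : ℝ≥0∞) : Prop :=
  ∃ v : ℝ → Torus → ℂ, (∀ t ∈ Set.Ioo 0 T, v t = u t) ∧ XcNorm s b v ≤ M

/-- `u` is a Bourgain-class solution of cubic NLS on `[0,T]` with datum `u₀`. -/
def IsNLSSolution (μ T : ℝ) (u₀ : Torus → ℂ) (u : ℝ → Torus → ℂ) : Prop :=
  ContL2On (Set.Icc 0 T) u ∧ SpaceTimeL4 T u ∧
  (∃ b ∈ Set.Ioo (1 / 2 : ℝ) (5 / 8 : ℝ), ∃ v : ℝ → Torus → ℂ,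
      (∀ t ∈ Set.Ioo 0 T, v t = u t) ∧ XcNorm 0 b v < ⊤) ∧
  u 0 = u₀ ∧ DistribSolOn μ T u

/-- One step of the pointwise nonlinear flow `e^{iμτ|Π_τ f|²} Π_τ f`. -/
def lieFlow (μ τ : ℝ) (f : Torus → ℂ) : Torus → ℂ := fun x =>
  Complex.exp (Complex.I * μ * τ * (‖projC τ f x‖ : ℂ) ^ 2) * projC τ f x

/-- The filtered Lie splitting scheme `u⁰ = Π_τ u₀`,
`u^{n+1} = e^{iτ∂_x²} Π_τ (e^{iμτ|Π_τ uⁿ|²} Π_τ uⁿ)`. -/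
def lieScheme (μ τ : ℝ) (u₀ : Torus → ℂ) : ℕ → Torus → ℂ
  | 0 => projC τ u₀
  | n + 1 => schrod τ (projC τ (lieFlow μ τ (lieScheme μ τ u₀ n)))

/-- `d_τ(σ) = (e^{iτσ}-1)/τ`. -/
def dtau (τ σ : ℝ) : ℂ := (Complex.exp (Complex.I * τ * σ) - 1) / τ

/-- The discrete Bourgain `X^{s,b}_τ` norm of a sequence of functions on the torus. -/
def XdNorm (τ s b : ℝ) (u : ℤ → Torus → ℂ) : ℝ :=
  Real.sqrt (∫ σ in Set.Ioc (-(Real.pi / τ)) (Real.pi / τ),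
    ∑' k : ℤ, jbr k ^ (2 * s) * jbr ‖dtau τ (σ - (k : ℝ) ^ 2)‖ ^ (2 * b) *
      ‖(τ : ℂ) * ∑' m : ℤ, fourierCoeff (u m) k * Complex.exp (Complex.I * m * τ * σ)‖ ^ 2)

/-- The discrete space-time Lebesgue norm `‖(u_n)‖_{ℓ^p_τ L^q}`. -/
def lpLqNorm (τ p q : ℝ) (u : ℤ → Torus → ℂ) : ℝ :=
  (τ * ∑' n : ℤ, (eLpNorm (u n) (ENNReal.ofReal q) haarAddCircle).toReal ^ p) ^ (1 / p)

lemma aux_jbr_ge (x : ℝ) : 1 ≤ jbr x := by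
  unfold jbr
  rw [Real.one_le_sqrt]
  nlinarith [sq_nonneg x]

lemma aux_jbr_rpow (x b : ℝ) : jbr x ^ (2 * b) = (1 + x ^ 2) ^ b := by
  unfold jbr
  have h : 0 ≤ 1 + x ^ 2 := by positivity
  rw [Real.sqrt_eq_rpow, ← Real.rpow_mul h]
  congr 1
  ring

lemma aux_dtau_norm (τ σ : ℝ) (hτ : 0 < τ) :
    ‖dtau τ σ‖ = 2 * |Real.sin (τ * σ / 2)| / τ := by
  unfold dtau
  have h : Complex.I * τ * σ = Complex.I * ((τ * σ : ℝ) : ℂ) := by push_cast; ring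
  rw [norm_div, h, Complex.norm_exp_I_mul_ofReal_sub_one, Complex.norm_real, Real.norm_eq_abs,
    Real.norm_eq_abs, abs_mul, abs_of_pos hτ]
  norm_num

lemma aux_dtau_cont (τ : ℝ) : Continuous (dtau τ) := by
  unfold dtau
  fun_prop

lemma aux_w_cont (τ b : ℝ) : Continuous fun σ : ℝ => jbr ‖dtau τ σ‖ ^ (2 * b) := by
  simp only [aux_jbr_rpow]
  have := aux_dtau_cont τ
  refine Continuous.rpow_const (by fun_prop) (fun x => Or.inl (by positivity))

lemma aux_w_ge (τ b σ : ℝ) (hb : 0 < b) : 1 ≤ jbr ‖dtau τ σ‖ ^ (2 * b) :=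
  Real.one_le_rpow (aux_jbr_ge _) (by linarith)

lemma aux_w_le (τ b σ : ℝ) (hτ : 0 < τ) (hb : 0 < b) :
    jbr ‖dtau τ σ‖ ^ (2 * b) ≤ (1 + (2 / τ) ^ 2) ^ b := by
  rw [aux_jbr_rpow]
  have h : ‖dtau τ σ‖ ≤ 2 / τ := by
    rw [aux_dtau_norm _ _ hτ]
    have := Real.abs_sin_le_one (τ * σ / 2)
    gcongr
    linarith
  gcongr

lemma aux_w_lower (τ b σ : ℝ) (hτ : 0 < τ) (hb : 0 < b) (hσ : |σ| ≤ Real.pi / τ) :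
    (1 + ‖2 / Real.pi * σ‖ ^ 2) ^ b ≤ jbr ‖dtau τ σ‖ ^ (2 * b) := by
  rw [aux_jbr_rpow]
  have hp := Real.pi_pos
  have h : ‖2 / Real.pi * σ‖ ≤ ‖dtau τ σ‖ := by
    rw [aux_dtau_norm _ _ hτ, Real.norm_eq_abs, abs_mul, abs_of_pos (by positivity : 0 < 2 / Real.pi),
      le_div_iff₀ hτ]
    have h1 : |τ * σ / 2| = τ * |σ| / 2 := by
      rw [abs_div, abs_mul, abs_of_pos hτ, abs_two]
    have h2 : |τ * σ / 2| ≤ Real.pi / 2 := by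
      rw [h1]
      rw [le_div_iff₀ hτ] at hσ
      linarith
    have h3 := Real.mul_abs_le_abs_sin h2
    rw [h1] at h3
    linarith
  gcongr

lemma aux_periodic (τ b : ℝ) (hτ : 0 < τ) :
    Function.Periodic (fun σ : ℝ => (jbr ‖dtau τ σ‖ ^ (2 * b))⁻¹) (2 * Real.pi / τ) := by
  intro σ
  have h : dtau τ (σ + 2 * Real.pi / τ) = dtau τ σ := by
    unfold dtau
    have hτ' : (τ : ℂ) ≠ 0 := by exact_mod_cast hτ.ne'
    have : Complex.I * τ * ((σ + 2 * Real.pi / τ : ℝ) : ℂ)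
        = Complex.I * τ * σ + 2 * Real.pi * Complex.I := by
      push_cast
      field_simp
    rw [this, Complex.exp_periodic]
  simp only [h]

lemma aux_K_int (b : ℝ) (hb : 1 / 2 < b) :
    Integrable (fun x : ℝ => ((1 + ‖2 / Real.pi * x‖ ^ 2) ^ b)⁻¹) := by
  have h := integrable_rpow_neg_one_add_norm_sq (E := ℝ) (μ := volume) (r := 2 * b)
    (by simp; linarith)
  have h2 := h.comp_mul_left' (R := 2 / Real.pi) (by positivity)
  refine h2.congr (Eventually.of_forall fun x => ?_)
  have : -(2 * b) / 2 = -b := by ring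
  simp only [this]
  rw [Real.rpow_neg (by positivity)]

lemma aux_K_bound (τ b c : ℝ) (hτ : 0 < τ) (hb : 1 / 2 < b) :
    ∫ σ in (-(Real.pi / τ))..(Real.pi / τ), (jbr ‖dtau τ (σ - c)‖ ^ (2 * b))⁻¹
      ≤ ∫ x : ℝ, ((1 + ‖2 / Real.pi * x‖ ^ 2) ^ b)⁻¹ := by
  have hp : 0 < Real.pi / τ := div_pos Real.pi_pos hτ
  have hb0 : 0 < b := by linarith
  rw [intervalIntegral.integral_comp_sub_right (fun σ => (jbr ‖dtau τ σ‖ ^ (2 * b))⁻¹) c]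
  have e1 : Real.pi / τ - c = (-(Real.pi / τ) - c) + 2 * Real.pi / τ := by ring
  rw [e1, (aux_periodic τ b hτ).intervalIntegral_add_eq _ (-(Real.pi / τ))]
  have e2 : -(Real.pi / τ) + 2 * Real.pi / τ = Real.pi / τ := by ring
  rw [e2]
  have hc : Continuous fun σ : ℝ => (jbr ‖dtau τ σ‖ ^ (2 * b))⁻¹ :=
    (aux_w_cont τ b).inv₀ fun x => by linarith [aux_w_ge τ b x hb0]
  calc _ ≤ ∫ x in (-(Real.pi / τ))..(Real.pi / τ), ((1 + ‖2 / Real.pi * x‖ ^ 2) ^ b)⁻¹ := by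
        refine intervalIntegral.integral_mono_on (by linarith) (hc.intervalIntegrable _ _)
          ((aux_K_int b hb).intervalIntegrable) ?_
        intro x hx
        have := aux_w_lower τ b x hτ hb0 (abs_le.2 ⟨hx.1, hx.2⟩)
        gcongr
    _ ≤ _ := by
        rw [intervalIntegral.integral_of_le (by linarith)]
        exact setIntegral_le_integral (aux_K_int b hb)
          (Eventually.of_forall fun x => by positivity)

lemma aux_CS (a c : ℝ) (hac : a ≤ c) (f w : ℝ → ℝ) (hf : Continuous f) (hw : Continuous w)
    (hw0 : ∀ x, 1 ≤ w x) :
    (∫ x in a..c, f x) ^ 2 ≤ (∫ x in a..c, (w x)⁻¹) * ∫ x in a..c, w x * f x ^ 2 := by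
  have hw1 : ∀ x, w x ≠ 0 := fun x => by linarith [hw0 x]
  have hi : Continuous fun x => (w x)⁻¹ := hw.inv₀ hw1
  have key : ∀ t : ℝ, 0 ≤ (∫ x in a..c, (w x)⁻¹) * (t * t) + (-2 * ∫ x in a..c, f x) * t
      + ∫ x in a..c, w x * f x ^ 2 := by
    intro t
    have h0 : 0 ≤ ∫ x in a..c, (w x)⁻¹ * (w x * f x - t) ^ 2 := by
      refine intervalIntegral.integral_nonneg hac fun x _ => ?_
      have := hw0 x
      positivity
    have e : ∀ x, (w x)⁻¹ * (w x * f x - t) ^ 2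
        = ((w x)⁻¹ * (t * t) + f x * (-2 * t)) + w x * f x ^ 2 := by
      intro x
      have := hw1 x
      field_simp
      ring
    simp only [e] at h0
    rw [intervalIntegral.integral_add, intervalIntegral.integral_add,
      intervalIntegral.integral_mul_const, intervalIntegral.integral_mul_const] at h0
    · linarith
    all_goals exact Continuous.intervalIntegrable (by fun_prop) _ _
  have := discrim_le_zero key
  unfold discrim at this
  nlinarith

lemma aux_orth (τ : ℝ) (hτ : 0 < τ) (m n : ℤ) :
    ∫ σ in (-(Real.pi / τ))..(Real.pi / τ),
      Complex.exp (Complex.I * m * τ * σ) * Complex.exp (-(Complex.I * n * τ * σ))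
      = if m = n then ((2 * Real.pi / τ : ℝ) : ℂ) else 0 := by
  have hτ' : (τ : ℂ) ≠ 0 := by exact_mod_cast hτ.ne'
  split_ifs with h
  · subst h
    simp only [← Complex.exp_add, add_neg_cancel, Complex.exp_zero]
    rw [intervalIntegral.integral_const]
    simp
    ring
  · have e : ∀ σ : ℝ, Complex.exp (Complex.I * m * τ * σ) * Complex.exp (-(Complex.I * n * τ * σ))
        = Complex.exp ((Complex.I * ((m - n : ℤ) : ℂ) * τ) * σ) := by
      intro σ
      rw [← Complex.exp_add]
      congr 1
      push_cast
      ring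
    simp only [e]
    have hmn : ((m - n : ℤ) : ℂ) ≠ 0 := by exact_mod_cast sub_ne_zero.2 h
    rw [integral_exp_mul_complex (mul_ne_zero (mul_ne_zero Complex.I_ne_zero hmn) hτ')]
    rw [div_eq_zero_iff]
    left
    rw [sub_eq_zero, Complex.exp_eq_exp_iff_exists_int]
    refine ⟨m - n, ?_⟩
    push_cast
    field_simp
    ring

lemma aux_recover (τ : ℝ) (hτ : 0 < τ) (S : Finset ℤ) (a : ℤ → ℂ) (n : ℤ) (hn : n ∉ S → a n = 0) :
    ∫ σ in (-(Real.pi / τ))..(Real.pi / τ),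
      ((τ : ℂ) * ∑ m ∈ S, a m * Complex.exp (Complex.I * m * τ * σ)) *
        Complex.exp (-(Complex.I * n * τ * σ))
      = 2 * Real.pi * a n := by
  have hτ' : (τ : ℂ) ≠ 0 := by exact_mod_cast hτ.ne'
  have e : ∀ σ : ℝ, ((τ : ℂ) * ∑ m ∈ S, a m * Complex.exp (Complex.I * m * τ * σ)) *
        Complex.exp (-(Complex.I * n * τ * σ)) = ∑ m ∈ S, (τ * a m) *
        (Complex.exp (Complex.I * m * τ * σ) * Complex.exp (-(Complex.I * n * τ * σ))) := by
    intro σ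
    rw [Finset.mul_sum, Finset.sum_mul]
    refine Finset.sum_congr rfl fun m _ => by ring
  simp only [e]
  rw [intervalIntegral.integral_finsetSum
    (fun m _ => Continuous.intervalIntegrable (by fun_prop) _ _)]
  simp only [intervalIntegral.integral_const_mul, aux_orth τ hτ]
  simp only [mul_ite, mul_zero, Finset.sum_ite_eq']
  split_ifs with h
  · push_cast
    field_simp
  · rw [hn h]; simp

lemma aux_mode (τ b c : ℝ) (hτ : 0 < τ) (hb : 1 / 2 < b) (S : Finset ℤ) (a : ℤ → ℂ) (n : ℤ)
    (hn : n ∉ S → a n = 0) :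
    ‖a n‖ ^ 2 ≤ (∫ x : ℝ, ((1 + ‖2 / Real.pi * x‖ ^ 2) ^ b)⁻¹) *
      ∫ σ in (-(Real.pi / τ))..(Real.pi / τ), jbr ‖dtau τ (σ - c)‖ ^ (2 * b) *
        ‖(τ : ℂ) * ∑ m ∈ S, a m * Complex.exp (Complex.I * m * τ * σ)‖ ^ 2 := by
  have hp : 0 < Real.pi / τ := div_pos Real.pi_pos hτ
  have hb0 : 0 < b := by linarith
  have h1 := aux_recover τ hτ S a n hn
  have h2 : 2 * Real.pi * ‖a n‖ ≤ ∫ σ in (-(Real.pi / τ))..(Real.pi / τ),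
      ‖(τ : ℂ) * ∑ m ∈ S, a m * Complex.exp (Complex.I * m * τ * σ)‖ := by
    have h3 : ‖(2 * Real.pi * a n : ℂ)‖ = 2 * Real.pi * ‖a n‖ := by
      simp [abs_of_pos Real.pi_pos]
    rw [← h3, ← h1]
    refine (intervalIntegral.norm_integral_le_integral_norm (by linarith)).trans (le_of_eq ?_)
    congr 1
    ext σ
    rw [norm_mul _ (Complex.exp _)]
    have : -(Complex.I * n * τ * σ) = ((-(n * τ * σ) : ℝ) : ℂ) * Complex.I := by push_cast; ring
    rw [this, Complex.norm_exp_ofReal_mul_I, mul_one]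
  have h4 : ‖a n‖ ≤ ∫ σ in (-(Real.pi / τ))..(Real.pi / τ),
      ‖(τ : ℂ) * ∑ m ∈ S, a m * Complex.exp (Complex.I * m * τ * σ)‖ := by
    have := Real.pi_gt_three
    nlinarith [norm_nonneg (a n)]
  have hwc : Continuous fun σ : ℝ => jbr ‖dtau τ (σ - c)‖ ^ (2 * b) :=
    (aux_w_cont τ b).comp (continuous_id.sub continuous_const)
  have h5 := aux_CS (-(Real.pi / τ)) (Real.pi / τ) (by linarith)
    (fun σ : ℝ => ‖(τ : ℂ) * ∑ m ∈ S, a m * Complex.exp (Complex.I * m * τ * σ)‖)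
    (fun σ : ℝ => jbr ‖dtau τ (σ - c)‖ ^ (2 * b)) (by fun_prop) hwc
    (fun σ => aux_w_ge τ b _ hb0)
  refine (pow_le_pow_left₀ (norm_nonneg _) h4 2).trans (h5.trans ?_)
  refine mul_le_mul_of_nonneg_right (aux_K_bound τ b c hτ hb) ?_
  refine intervalIntegral.integral_nonneg (by linarith) fun x _ => ?_
  have := aux_w_ge τ b (x - c) hb0
  positivity

lemma aux_F_le (τ σ : ℝ) (S : Finset ℤ) (a : ℤ → ℂ) :
    ‖(τ : ℂ) * ∑ m ∈ S, a m * Complex.exp (Complex.I * m * τ * σ)‖ ^ 2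
      ≤ τ ^ 2 * (S.card * ∑ m ∈ S, ‖a m‖ ^ 2) := by
  rw [norm_mul, mul_pow, Complex.norm_real, Real.norm_eq_abs, sq_abs]
  have h : ‖∑ m ∈ S, a m * Complex.exp (Complex.I * m * τ * σ)‖ ≤ ∑ m ∈ S, ‖a m‖ := by
    refine (norm_sum_le _ _).trans (Finset.sum_le_sum fun m _ => ?_)
    have : Complex.I * m * τ * σ = ((m * τ * σ : ℝ) : ℂ) * Complex.I := by push_cast; ring
    rw [norm_mul, this, Complex.norm_exp_ofReal_mul_I, mul_one]
  have h2 := pow_le_pow_left₀ (norm_nonneg _) h 2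
  have h3 := sq_sum_le_card_mul_sum_sq (s := S) (f := fun m => ‖a m‖)
  gcongr
  exact h2.trans h3

/-- The embedding `X^{s,b}_τ ⊂ ℓ^∞_τ H^s` for `b > 1/2`, uniformly in `τ`. -/
theorem discrete_bourgain_linfty_embedding (s b : ℝ) (hb : 1 / 2 < b) :
    ∃ C > (0 : ℝ), ∀ τ ∈ Set.Ioc (0 : ℝ) 1, ∀ u : ℤ → Torus → ℂ,
      (∀ n, InHs s (u n)) → {n : ℤ | u n ≠ 0}.Finite →
      ∀ n : ℤ, hsNorm s (u n) ≤ C * XdNorm τ s b u := by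
  set K : ℝ := ∫ x : ℝ, ((1 + ‖2 / Real.pi * x‖ ^ 2) ^ b)⁻¹ with hK
  have hK0 : 0 ≤ K := integral_nonneg fun x => by positivity
  have hb0 : 0 < b := by linarith
  refine ⟨Real.sqrt (K + 1), Real.sqrt_pos.2 (by linarith), ?_⟩
  rintro τ ⟨hτ, -⟩ u hu hfin n
  have hp : 0 < Real.pi / τ := div_pos Real.pi_pos hτ
  set S : Finset ℤ := hfin.toFinset with hS
  have hz : ∀ m, m ∉ S → u m = 0 := by
    intro m hm
    by_contra h
    exact hm (by simpa [hS] using h)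
  have hzc : ∀ m k, m ∉ S → fourierCoeff (u m) k = 0 := by
    intro m k hm
    rw [hz m hm]
    simp [fourierCoeff]
  have hts : ∀ (k : ℤ) (σ : ℝ),
      ∑' m : ℤ, fourierCoeff (u m) k * Complex.exp (Complex.I * m * τ * σ)
        = ∑ m ∈ S, fourierCoeff (u m) k * Complex.exp (Complex.I * m * τ * σ) := by
    intro k σ
    refine tsum_eq_sum fun m hm => ?_
    rw [hzc m k hm, zero_mul]
  set F : ℤ → ℝ → ℝ := fun k σ => jbr k ^ (2 * s) * jbr ‖dtau τ (σ - (k : ℝ) ^ 2)‖ ^ (2 * b) *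
      ‖(τ : ℂ) * ∑ m ∈ S, fourierCoeff (u m) k * Complex.exp (Complex.I * m * τ * σ)‖ ^ 2 with hF
  have hX : XdNorm τ s b u
      = Real.sqrt (∫ σ in Set.Ioc (-(Real.pi / τ)) (Real.pi / τ), ∑' k : ℤ, F k σ) := by
    unfold XdNorm
    simp only [hts, hF]
  have hj : ∀ k : ℤ, 0 ≤ jbr k ^ (2 * s) := fun k =>
    Real.rpow_nonneg (by linarith [aux_jbr_ge k]) _
  have hF0 : ∀ k σ, 0 ≤ F k σ := by
    intro k σ
    have h1 := aux_w_ge τ b (σ - (k : ℝ) ^ 2) hb0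
    have h2 := hj k
    simp only [hF]
    positivity
  have hwc : ∀ c : ℝ, Continuous fun σ : ℝ => jbr ‖dtau τ (σ - c)‖ ^ (2 * b) := fun c =>
    (aux_w_cont τ b).comp (continuous_id.sub continuous_const)
  have hFc : ∀ k, Continuous (F k) := by
    intro k
    have := hwc ((k : ℝ) ^ 2)
    simp only [hF]
    fun_prop
  have hFi : ∀ k, Integrable (F k) (volume.restrict (Set.Ioc (-(Real.pi / τ)) (Real.pi / τ))) :=
    fun k => ((hFc k).integrableOn_Icc).mono_set Set.Ioc_subset_Icc_self
  set M : ℝ := (1 + (2 / τ) ^ 2) ^ b * (τ ^ 2 * S.card) with hM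
  have hFb : ∀ k σ, F k σ ≤ M * ∑ m ∈ S, jbr k ^ (2 * s) * ‖fourierCoeff (u m) k‖ ^ 2 := by
    intro k σ
    have h1 := aux_w_le τ b (σ - (k : ℝ) ^ 2) hτ hb0
    have h1' := aux_w_ge τ b (σ - (k : ℝ) ^ 2) hb0
    have h2 := aux_F_le τ σ S (fun m => fourierCoeff (u m) k)
    have h3 := hj k
    rw [← Finset.mul_sum]
    calc F k σ ≤ jbr k ^ (2 * s) * (1 + (2 / τ) ^ 2) ^ b *
          (τ ^ 2 * (S.card * ∑ m ∈ S, ‖fourierCoeff (u m) k‖ ^ 2)) := by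
          simp only [hF]
          gcongr
      _ = _ := by rw [hM]; ring
  have hsum0 : Summable fun k : ℤ =>
      ∑ m ∈ S, jbr k ^ (2 * s) * ‖fourierCoeff (u m) k‖ ^ 2 :=
    summable_sum fun m _ => (hu m).2
  have hsum : Summable fun k => ∫ σ in Set.Ioc (-(Real.pi / τ)) (Real.pi / τ), ‖F k σ‖ := by
    refine Summable.of_nonneg_of_le (fun k => integral_nonneg fun σ => norm_nonneg _)
      (fun k => ?_) ((hsum0.mul_left M).mul_left (Real.pi / τ - -(Real.pi / τ)))
    rw [← intervalIntegral.integral_of_le (by linarith)]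
    have h := intervalIntegral.integral_mono_on (by linarith : -(Real.pi / τ) ≤ Real.pi / τ)
      ((hFc k).norm.intervalIntegrable (μ := volume) _ _)
      (intervalIntegrable_const (μ := volume) (c := M * ∑ m ∈ S, jbr k ^ (2 * s) * ‖fourierCoeff (u m) k‖ ^ 2))
      (fun σ _ => by
        rw [Real.norm_of_nonneg (hF0 k σ)]
        exact hFb k σ)
    rwa [intervalIntegral.integral_const, smul_eq_mul] at h
  have hHS := hasSum_integral_of_summable_integral_norm hFi hsum
  rw [hX, ← Real.sqrt_mul (by linarith)]
  unfold hsNorm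
  refine Real.sqrt_le_sqrt ?_
  rw [← hHS.tsum_eq, ← tsum_mul_left]
  refine Summable.tsum_le_tsum (fun k => ?_) (hu n).2 (hHS.summable.mul_left _)
  have h1 := aux_mode τ b ((k : ℝ) ^ 2) hτ hb S (fun m => fourierCoeff (u m) k) n
    (fun h => hzc n k h)
  have h2 : ∫ σ in Set.Ioc (-(Real.pi / τ)) (Real.pi / τ), F k σ = jbr k ^ (2 * s) *
      ∫ σ in (-(Real.pi / τ))..(Real.pi / τ), jbr ‖dtau τ (σ - (k : ℝ) ^ 2)‖ ^ (2 * b) *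
      ‖(τ : ℂ) * ∑ m ∈ S, fourierCoeff (u m) k * Complex.exp (Complex.I * m * τ * σ)‖ ^ 2 := by
    rw [← intervalIntegral.integral_const_mul, intervalIntegral.integral_of_le (by linarith)]
    simp only [hF, mul_assoc]
  have h3 : 0 ≤ ∫ σ in Set.Ioc (-(Real.pi / τ)) (Real.pi / τ), F k σ :=
    integral_nonneg fun σ => hF0 k σ
  have h4 := mul_le_mul_of_nonneg_left h1 (hj k)
  calc _ ≤ _ := h4
    _ = K * ∫ σ in Set.Ioc (-(Real.pi / τ)) (Real.pi / τ), F k σ := by rw [h2]; ring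
    _ ≤ _ := by nlinarith
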